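/- Let U ⊆ ℝ² be open and connected, f, f★ : U → Im ℍ smooth, λ ∈ ℝ, and let g : U → ℍ be a smooth solution of the Riccati equations ∂_x g = g·λ·f★_x·g − f_x and ∂_y g = g·λ·f★_y·g − f_y on U. If g(p₀) ∈ Im ℍ for some point p₀ ∈ U, then g(p) ∈ Im ℍ for every p ∈ U. (In particular, a Darboux transform f̂ = f + g of f with one value in Im ℍ ∪ {∞} stays in the conformal 3-sphere.) -/

import Mathlib

/-!
The real part `r = re g` satisfies a linear homogeneous equation. For `w ∈ Im ℍ` one has
`re (q w q) = 2 (re q) (re (w q))`, and the derivatives of `f` and `f★` are again imaginary, so the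
Riccati equation gives `dr = r · α` with the continuous one-form `α = 2 λ re (df★ · g)`.
Grönwall's inequality along segments shows that the zero set of `r` is open
(`zero_on_of_norm_fderiv_le`); it is also closed in `U`, hence all of `U` by connectedness as soon
as it is nonempty.
-/


/- STATEMENT 6: On a connected open U ⊆ ℝ², a smooth solution g of the Riccati
equations ∂g = g·(λ df★)·g − df associated with maps f, f★ : U → Im ℍ that takes
one value in Im ℍ takes all its values in Im ℍ. -/

noncomputable section
open scoped ContDiff Quaternion

abbrev HQ : Type := Quaternion ℝ

noncomputable def pdx {E : Type} [NormedAddCommGroup E] [NormedSpace ℝ E]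
    (f : ℝ × ℝ → E) (p : ℝ × ℝ) : E := fderiv ℝ f p (1, 0)

noncomputable def pdy {E : Type} [NormedAddCommGroup E] [NormedSpace ℝ E]
    (f : ℝ × ℝ → E) (p : ℝ × ℝ) : E := fderiv ℝ f p (0, 1)

/-- A function whose derivative is bounded by a continuous multiple of the function itself vanishes
on a connected open set as soon as it has one zero there. -/
theorem zero_on_of_norm_fderiv_le {E : Type*} [NormedAddCommGroup E] [NormedSpace ℝ E]
    {U : Set E} (hU : IsOpen U) (hconn : IsPreconnected U) {r C : E → ℝ}
    (hr : DifferentiableOn ℝ r U) (hC : ContinuousOn C U)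
    (hbound : ∀ p ∈ U, ‖fderiv ℝ r p‖ ≤ C p * ‖r p‖)
    {p₀ : E} (hp₀ : p₀ ∈ U) (h₀ : r p₀ = 0) : ∀ p ∈ U, r p = 0 := by
  have key : U ⊆ U ∩ r ⁻¹' {0} := by
    refine hconn.subset_of_closure_inter_subset ?_ ⟨p₀, hp₀, hp₀, h₀⟩ ?_
    · rw [Metric.isOpen_iff]
      rintro q ⟨hqU, hq⟩
      -- Near `q` the coefficient `C` stays below the constant `C q + 1`.
      have hev : ∀ᶠ p in nhds q, p ∈ U ∧ C p < C q + 1 :=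
        (hU.eventually_mem hqU).and
          ((hC.continuousAt (hU.mem_nhds hqU)).eventually_lt_const (lt_add_one _))
      obtain ⟨ε, hε, hball⟩ := Metric.eventually_nhds_iff_ball.1 hev
      refine ⟨ε, hε, fun p hp => ⟨(hball p hp).1, ?_⟩⟩
      have hseg : ∀ t ∈ Set.Icc (0 : ℝ) 1, q + t • (p - q) ∈ Metric.ball q ε := fun t ht =>
        (convex_ball q ε).add_smul_sub_mem (Metric.mem_ball_self hε) hp ht
      have hderiv : ∀ t ∈ Set.Icc (0 : ℝ) 1, HasDerivAt (fun t : ℝ => r (q + t • (p - q)))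
          (fderiv ℝ r (q + t • (p - q)) (p - q)) t := by
        intro t ht
        have h1 : HasDerivAt (fun t : ℝ => q + t • (p - q)) (p - q) t := by
          simpa using ((hasDerivAt_id t).smul_const (p - q)).const_add q
        have hmem := (hball _ (hseg t ht)).1
        exact ((hr.differentiableAt (hU.mem_nhds hmem)).hasFDerivAt).comp_hasDerivAt t h1
      have hgr := norm_le_gronwallBound_of_norm_deriv_right_le
        (f := fun t : ℝ => r (q + t • (p - q)))
        (f' := fun t : ℝ => fderiv ℝ r (q + t • (p - q)) (p - q))
        (δ := 0) (K := (C q + 1) * ‖p - q‖) (ε := 0) (a := 0) (b := 1)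
        (fun t ht => (hderiv t ht).continuousAt.continuousWithinAt)
        (fun t ht => (hderiv t (Set.Ico_subset_Icc_self ht)).hasDerivWithinAt)
        (by
          have hq' : r q = 0 := hq
          simp [hq'])
        (fun t ht => by
          obtain ⟨hm, hlt⟩ := hball _ (hseg t (Set.Ico_subset_Icc_self ht))
          calc ‖fderiv ℝ r (q + t • (p - q)) (p - q)‖
              ≤ ‖fderiv ℝ r (q + t • (p - q))‖ * ‖p - q‖ := ContinuousLinearMap.le_opNorm _ _
            _ ≤ ((C q + 1) * ‖r (q + t • (p - q))‖) * ‖p - q‖ := by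
                gcongr
                exact (hbound _ hm).trans (by gcongr)
            _ = (C q + 1) * ‖p - q‖ * ‖r (q + t • (p - q))‖ + 0 := by ring)
        1 (by simp)
      rw [gronwallBound_ε0_δ0] at hgr
      simpa using hgr
    · rintro q ⟨hqc, hqU⟩
      refine ⟨hqU, ?_⟩
      have hcl : r q ∈ closure ({0} : Set ℝ) :=
        ((hr.continuousOn.continuousAt (hU.mem_nhds hqU)).continuousWithinAt).mem_closure hqc
          fun x hx => hx.2
      simpa using hcl
  exact fun p hp => (key hp).2

/-- The real part as a continuous linear functional on `ℍ`, namely the inner product with `1`. -/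
def reL : HQ →L[ℝ] ℝ := innerSL ℝ (1 : HQ)

theorem reL_apply (q : HQ) : reL q = q.re := by
  simp [reL, Quaternion.inner_def]

theorem abs_re_le_norm (q : HQ) : |q.re| ≤ ‖q‖ := by
  rw [← reL_apply]
  simpa [reL] using norm_inner_le_norm (𝕜 := ℝ) (1 : HQ) q

theorem re_mul_mul_self (q w : HQ) (hw : w.re = 0) :
    (q * w * q).re = 2 * q.re * (w * q).re := by
  simp only [Quaternion.re_mul, Quaternion.imI_mul, Quaternion.imJ_mul, Quaternion.imK_mul, hw]
  ring

theorem re_fderiv_eq_zero {U : Set (ℝ × ℝ)} (hU : IsOpen U) {f : ℝ × ℝ → HQ}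
    (hf : DifferentiableOn ℝ f U) (hfIm : ∀ p ∈ U, (f p).re = 0) {p : ℝ × ℝ} (hp : p ∈ U)
    (v : ℝ × ℝ) : (fderiv ℝ f p v).re = 0 := by
  have h1 : HasFDerivAt (fun x => reL (f x)) (reL.comp (fderiv ℝ f p)) p :=
    reL.hasFDerivAt.comp p (hf.differentiableAt (hU.mem_nhds hp)).hasFDerivAt
  have h2 : HasFDerivAt (fun x => reL (f x)) (0 : ℝ × ℝ →L[ℝ] ℝ) p := by
    refine (hasFDerivAt_const (0 : ℝ) p).congr_of_eventuallyEq ?_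
    filter_upwards [hU.mem_nhds hp] with x hx
    rw [reL_apply, hfIm x hx]
  have h3 := DFunLike.congr_fun (h1.unique h2) v
  simpa [reL_apply] using h3

theorem riccati_solution_stays_imaginary
    (U : Set (ℝ × ℝ)) (hU : IsOpen U) (hconn : IsConnected U)
    (f fs g : ℝ × ℝ → HQ) (l : ℝ)
    (hf : ContDiffOn ℝ ∞ f U) (hfs : ContDiffOn ℝ ∞ fs U)
    (hfIm : ∀ p ∈ U, (f p).re = 0) (hfsIm : ∀ p ∈ U, (fs p).re = 0)
    (hg : ContDiffOn ℝ ∞ g U)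
    (hRx : ∀ p ∈ U, pdx g p = g p * ((l : HQ) * pdx fs p) * g p - pdx f p)
    (hRy : ∀ p ∈ U, pdy g p = g p * ((l : HQ) * pdy fs p) * g p - pdy f p)
    (p₀ : ℝ × ℝ) (hp₀ : p₀ ∈ U) (hg₀ : (g p₀).re = 0) :
    ∀ p ∈ U, (g p).re = 0 := by
  have hfd := hf.differentiableOn (by simp)
  have hfsd := hfs.differentiableOn (by simp)
  have hgd := hg.differentiableOn (by simp)
  have hR : ∀ p ∈ U, ∀ v : ℝ × ℝ,
      fderiv ℝ g p v = g p * ((l : HQ) * fderiv ℝ fs p v) * g p - fderiv ℝ f p v := by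
    intro p hp v
    have hv : v = v.1 • ((1 : ℝ), (0 : ℝ)) + v.2 • ((0 : ℝ), (1 : ℝ)) := by
      ext <;> simp
    have hx := hRx p hp
    have hy := hRy p hp
    simp only [pdx, pdy] at hx hy
    rw [hv]
    simp only [map_add, map_smul, hx, hy, mul_add, add_mul, mul_smul_comm, smul_mul_assoc,
      smul_sub]
    abel
  have hrderiv : ∀ p ∈ U, HasFDerivAt (fun x => (g x).re) (reL.comp (fderiv ℝ g p)) p := by
    intro p hp
    have h := reL.hasFDerivAt.comp p (hgd.differentiableAt (hU.mem_nhds hp)).hasFDerivAt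
    have he : (reL ∘ g) = fun x => (g x).re := funext fun x => reL_apply (g x)
    rwa [he] at h
  refine zero_on_of_norm_fderiv_le hU hconn.isPreconnected
    (C := fun p => 2 * |l| * ‖fderiv ℝ fs p‖ * ‖g p‖)
    (fun p hp => (hrderiv p hp).differentiableAt.differentiableWithinAt) ?_ ?_ hp₀ hg₀
  · exact (continuousOn_const.mul
      (hfs.continuousOn_fderiv_of_isOpen hU (by simp)).norm).mul hg.continuousOn.norm
  · intro p hp
    rw [(hrderiv p hp).fderiv]
    refine ContinuousLinearMap.opNorm_le_bound _ (by positivity) fun v => ?_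
    have hw : ((l : HQ) * fderiv ℝ fs p v).re = 0 := by
      simp [re_fderiv_eq_zero hU hfsd hfsIm hp v]
    have hval : reL.comp (fderiv ℝ g p) v
        = 2 * (g p).re * ((l : HQ) * fderiv ℝ fs p v * g p).re := by
      rw [ContinuousLinearMap.comp_apply, reL_apply, hR p hp v, Quaternion.re_sub,
        re_fderiv_eq_zero hU hfd hfIm hp v, sub_zero, re_mul_mul_self _ _ hw]
    rw [hval, Real.norm_eq_abs, Real.norm_eq_abs, abs_mul, abs_mul, abs_two]
    calc 2 * |(g p).re| * |((l : HQ) * fderiv ℝ fs p v * g p).re|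
        ≤ 2 * |(g p).re| * (|l| * (‖fderiv ℝ fs p‖ * ‖v‖) * ‖g p‖) := by
          gcongr
          refine (abs_re_le_norm _).trans ?_
          rw [norm_mul, norm_mul, Quaternion.norm_coe, Real.norm_eq_abs]
          gcongr
          exact ContinuousLinearMap.le_opNorm _ _
      _ = 2 * |l| * ‖fderiv ℝ fs p‖ * ‖g p‖ * |(g p).re| * ‖v‖ := by ring

end
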